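/- Let d be a positive integer and let 0 < x₀ < t₀ < 1 be real numbers with d·F(x₀,t₀) + H(x₀) < 0. Then the proportion of perfect matchings M of the set {1,…,N}×{1,…,d} such that every nonempty subset U ⊆ {1,…,N} with |U| ≤ x₀·N satisfies e_M[U] ≤ (t₀·d/2)·|U|, tends to 1 as N → ∞ along integers N with N·d even. -/

import Mathlib

/-- `P` is a perfect matching of `α`: a set of non-diagonal unordered pairs such that
every element of `α` belongs to exactly one pair. -/
def IsPerfectMatching {α : Type*} (P : Set (Sym2 α)) : Prop :=
  (∀ e ∈ P, ¬ e.IsDiag) ∧ ∀ x : α, ∃! e, e ∈ P ∧ x ∈ e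

/-- The number of pairs of the matching `P` both of whose elements have first
coordinate in `U`. -/
noncomputable def pairsIn {α β : Type*} (P : Set (Sym2 (α × β))) (U : Set α) : ℕ :=
  {e ∈ P | ∀ x ∈ e, x.1 ∈ U}.ncard

/-- `h x = -x log x` (with `h 0 = 0`, since `Real.log 0 = 0`). -/
noncomputable def entH (x : ℝ) : ℝ := -x * Real.log x

/-- `H x = h x + h (1 - x)`. -/
noncomputable def entHH (x : ℝ) : ℝ := entH x + entH (1 - x)

/-- The rate function `F(x,t)`. -/
noncomputable def entF (x t : ℝ) : ℝ :=
  (1 / 2) * entH (t * x) + entH ((1 - t) * x) + (1 / 2) * entH (1 - (2 - t) * x) - entHH x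

/-!
All sets `U` of a given size are equally likely to be dense, so `Nat.choose N u` times the
probability for one of them is the expected number of dense ones. Averaged over *all* subsets `S` of
the `N * d` points, the exponential moment of the number of pairs inside `S` is explicit: weighting
`S` by `q ^ #S`, it factors over the pairs of the matching as `(1 + 2q + q²r) ^ (N * d / 2)`.
Optimizing `q` and `r` bounds the expected number of dense `U` with `|U| = x N` by `exp (N * rate)`
up to a polynomial factor, where `rate = d F(x, t₀) + H(x)`.

As a function of `x ∈ [0, t₀]` the rate is convex and then concave, vanishes at `0` and is positive
at `t₀`; if it is negative at `x₀`, it is therefore negative on `(0, x₀]`, and `d * t₀ > 2`. So the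
union bound over `η N ≤ |U| ≤ x₀ N` is exponentially small. For `|U| ≤ η N` a cruder choice of `q`
and `r` gives `C ^ u * (u / N) ^ (e - u)` for the expected number of sets of size `u` containing at
least `e` pairs; here `d * t₀ > 2` makes `e - u` positive and proportional to `u`.
-/

section

open Finset

section PerfectMatching

variable {α β ι : Type*}

/-- The pairing of `α` read off an enumeration `φ` of its elements two at a time: the `i`-th pair is
`{φ (i, true), φ (i, false)}`. -/
def pairsOf (φ : ι × Bool → α) : Set (Sym2 α) :=
  Set.range fun i => s(φ (i, true), φ (i, false))

/-- The number of pairs of `P` contained in `S`. With `S = Prod.fst ⁻¹' U` this is `pairsIn P U`. -/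
noncomputable def innerPairs (P : Set (Sym2 α)) (S : Set α) : ℕ :=
  {e ∈ P | ∀ x ∈ e, x ∈ S}.ncard

theorem image_pairsOf (f : α → β) (φ : ι × Bool → α) :
    Sym2.map f '' pairsOf φ = pairsOf (f ∘ φ) :=
  (Set.range_comp _ _).symm

theorem isPerfectMatching_pairsOf (φ : ι × Bool ≃ α) : IsPerfectMatching (pairsOf φ) := by
  refine ⟨?_, fun x => ?_⟩
  · rintro _ ⟨i, rfl⟩
    simp
  · obtain ⟨⟨i, b⟩, rfl⟩ := φ.surjective x
    refine ⟨s(φ (i, true), φ (i, false)), ⟨⟨i, rfl⟩, by cases b <;> simp⟩, ?_⟩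
    rintro _ ⟨⟨j, rfl⟩, hj⟩
    obtain rfl : i = j := by
      simp only [Sym2.mem_iff, EmbeddingLike.apply_eq_iff_eq, Prod.mk.injEq] at hj
      tauto
    rfl

theorem exists_isPerfectMatching [Fintype α] (h : Even (Fintype.card α)) :
    ∃ P : Set (Sym2 α), IsPerfectMatching P := by
  obtain ⟨m, hm⟩ := h
  exact ⟨_, isPerfectMatching_pairsOf (Fintype.equivOfCardEq (α := Fin m × Bool) <| by
    simp [hm, mul_two])⟩

theorem IsPerfectMatching.exists_eq_pairsOf {P : Set (Sym2 α)} (hP : IsPerfectMatching P) :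
    ∃ φ : P × Bool ≃ α, P = pairsOf φ := by
  let f : P × Bool → α := fun p => if p.2 then (Quot.out p.1.1).1 else (Quot.out p.1.1).2
  have hf : ∀ e : P, s(f (e, true), f (e, false)) = e := fun e => Quot.out_eq e.1
  have hmem : ∀ p : P × Bool, f p ∈ (p.1 : Sym2 α) := by
    rintro ⟨e, b⟩
    rw [← hf e]
    cases b <;> simp
  have hinj : Function.Injective f := by
    rintro ⟨e, b⟩ ⟨e', b'⟩ h
    obtain rfl : e = e' := Subtype.ext <|
      (hP.2 (f (e, b))).unique ⟨e.2, hmem (e, b)⟩ ⟨e'.2, h ▸ hmem (e', b')⟩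
    have hne : f (e, true) ≠ f (e, false) := fun h' => hP.1 e e.2 (hf e ▸ h')
    cases b <;> cases b' <;> first | rfl | exact absurd h hne | exact absurd h.symm hne
  have hsurj : Function.Surjective f := by
    intro x
    obtain ⟨e, ⟨he, hx⟩, -⟩ := hP.2 x
    have hx' : x ∈ s(f (⟨e, he⟩, true), f (⟨e, he⟩, false)) := (hf ⟨e, he⟩).symm ▸ hx
    exact (Sym2.mem_iff.1 hx').elim (fun h => ⟨_, h.symm⟩) fun h => ⟨_, h.symm⟩
  refine ⟨Equiv.ofBijective f ⟨hinj, hsurj⟩, ?_⟩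
  change P = Set.range fun e => s(f (e, true), f (e, false))
  rw [funext hf, Subtype.range_coe]

theorem IsPerfectMatching.image {P : Set (Sym2 α)} (hP : IsPerfectMatching P) (π : α ≃ β) :
    IsPerfectMatching (Sym2.map π '' P) := by
  obtain ⟨φ, hφ⟩ := hP.exists_eq_pairsOf
  have himage : Sym2.map π '' P = pairsOf (φ.trans π) :=
    (congrArg (Sym2.map π '' ·) hφ).trans (image_pairsOf π φ)
  rw [himage]
  exact isPerfectMatching_pairsOf _

theorem innerPairs_image (P : Set (Sym2 α)) (π : α ≃ β) (S : Set β) :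
    innerPairs (Sym2.map π '' P) S = innerPairs P (π ⁻¹' S) := by
  rw [innerPairs, innerPairs, ← Set.ncard_image_of_injective _ (Sym2.map.injective π.injective)]
  congr 1
  ext e
  constructor
  · rintro ⟨⟨e, he, rfl⟩, hS⟩
    exact ⟨e, ⟨he, fun x hx => hS _ (Sym2.mem_map.2 ⟨x, hx, rfl⟩)⟩, rfl⟩
  · rintro ⟨e, ⟨he, hS⟩, rfl⟩
    refine ⟨⟨e, he, rfl⟩, fun y hy => ?_⟩
    obtain ⟨x, hx, rfl⟩ := Sym2.mem_map.1 hy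
    exact hS x hx

theorem innerPairs_pairsOf [Fintype ι] [DecidableEq α] (φ : ι × Bool ≃ α) (S : Finset α) :
    innerPairs (pairsOf φ) S = #{i | φ (i, true) ∈ S ∧ φ (i, false) ∈ S} := by
  have hinj : Function.Injective fun i => s(φ (i, true), φ (i, false)) := by
    intro i j hij
    simp only [Sym2.eq_iff, EmbeddingLike.apply_eq_iff_eq, Prod.mk.injEq] at hij
    tauto
  rw [innerPairs, ← Set.ncard_coe_finset, ← Set.ncard_image_of_injective _ hinj]
  congr 1
  ext e
  constructor
  · rintro ⟨⟨i, rfl⟩, hS⟩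
    exact ⟨i, by simpa using hS, rfl⟩
  · rintro ⟨i, hi, rfl⟩
    exact ⟨⟨i, rfl⟩, by simpa using hi⟩

end PerfectMatching

section GeneratingFunction

variable {α ι : Type*} [Fintype α] [Fintype ι]

/-- A subset of a set enumerated two elements at a time, seen as the family of its traces on the
pairs. -/
def finsetEquivPairTraces [DecidableEq α] (φ : ι × Bool ≃ α) : Finset α ≃ (ι → Bool × Bool) where
  toFun S i := (decide (φ (i, true) ∈ S), decide (φ (i, false) ∈ S))
  invFun g := {x | bif (φ.symm x).2 then (g (φ.symm x).1).1 else (g (φ.symm x).1).2}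
  left_inv S := by
    ext x
    obtain ⟨⟨i, b⟩, rfl⟩ := φ.surjective x
    cases b <;> simp
  right_inv g := by
    ext i <;> simp

theorem sum_pow_card_mul_pow_innerPairs_pairsOf {R : Type*} [CommSemiring R] (φ : ι × Bool ≃ α)
    (q r : R) :
    ∑ S : Finset α, q ^ #S * r ^ innerPairs (pairsOf φ) S =
      (1 + 2 * q + q ^ 2 * r) ^ Fintype.card ι := by
  classical
  let w : Bool × Bool → R := fun p =>
    (if p.1 then q else 1) * (if p.2 then q else 1) * (if p.1 ∧ p.2 then r else 1)
  have hw : ∑ p, w p = 1 + 2 * q + q ^ 2 * r := by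
    simp only [w, Fintype.sum_prod_type, Fintype.sum_bool, Bool.false_eq_true, and_true, and_false,
      if_true, if_false]
    ring
  have hprod : ∀ S : Finset α,
      q ^ #S * r ^ innerPairs (pairsOf φ) S = ∏ i, w (finsetEquivPairTraces φ S i) := by
    intro S
    have hq : q ^ #S = ∏ i, (if φ (i, true) ∈ S then q else 1) *
        (if φ (i, false) ∈ S then q else 1) := by
      rw [← prod_const, ← Fintype.prod_ite_mem, ← φ.prod_comp, Fintype.prod_prod_type]
      simp only [Fintype.prod_bool]
    have hr : r ^ innerPairs (pairsOf φ) S =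
        ∏ i, if φ (i, true) ∈ S ∧ φ (i, false) ∈ S then r else 1 := by
      rw [innerPairs_pairsOf, ← prod_const, prod_filter]
    rw [hq, hr, ← prod_mul_distrib]
    simp only [w, finsetEquivPairTraces, Equiv.coe_fn_mk, decide_eq_true_eq]
  calc ∑ S : Finset α, q ^ #S * r ^ innerPairs (pairsOf φ) S
      = ∑ g : ι → Bool × Bool, ∏ i, w (g i) := by
        simp only [hprod]
        exact (finsetEquivPairTraces φ).sum_comp fun g => ∏ i, w (g i)
    _ = ∏ _i : ι, ∑ p, w p := by rw [prod_univ_sum, Fintype.piFinset_univ]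
    _ = (1 + 2 * q + q ^ 2 * r) ^ Fintype.card ι := by rw [hw, prod_const, card_univ]

theorem IsPerfectMatching.sum_pow_card_mul_pow_innerPairs {P : Set (Sym2 α)}
    (hP : IsPerfectMatching P) (q r : ℝ) :
    ∑ S : Finset α, q ^ #S * r ^ innerPairs P S =
      (1 + 2 * q + q ^ 2 * r) ^ (Fintype.card α / 2 : ℝ) := by
  classical
  obtain ⟨φ, hφ⟩ := hP.exists_eq_pairsOf
  have hcard : (Fintype.card α : ℝ) = 2 * Fintype.card P := by
    rw [← Fintype.card_congr φ, Fintype.card_prod, Fintype.card_bool, mul_comm]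
    push_cast
    ring
  have h := sum_pow_card_mul_pow_innerPairs_pairsOf φ q r
  rw [← hφ] at h
  rw [h, hcard, mul_div_cancel_left₀ _ two_ne_zero, Real.rpow_natCast]

/-- Markov's inequality for the generating function. -/
theorem IsPerfectMatching.card_filter_innerPairs_mul_le {P : Set (Sym2 α)}
    (hP : IsPerfectMatching P) {q r : ℝ} (hq : 0 < q) (hr : 1 ≤ r) (k : ℕ) (s : ℝ) :
    #{S ∈ powersetCard k univ | s ≤ innerPairs P ((S : Finset α) : Set α)} * (q ^ k * r ^ s) ≤
      (1 + 2 * q + q ^ 2 * r) ^ (Fintype.card α / 2 : ℝ) := by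
  have : 0 ≤ r := zero_le_one.trans hr
  rw [← hP.sum_pow_card_mul_pow_innerPairs q r, ← nsmul_eq_mul]
  refine (card_nsmul_le_sum _ (fun S : Finset α => q ^ #S * r ^ innerPairs P S) _ ?_).trans
    (sum_le_sum_of_subset_of_nonneg (subset_univ _) fun S _ _ => by positivity)
  intro S hS
  rw [mem_filter, mem_powersetCard] at hS
  obtain ⟨⟨-, hSk⟩, hs⟩ := hS
  rw [hSk, ← Real.rpow_natCast r]
  gcongr

end GeneratingFunction

section MatchingProb

variable {α ι : Type*}

/-- The probability that a uniformly random perfect matching of `α` satisfies `p`; it is `0` when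
`α` has no perfect matching. -/
noncomputable def matchingProb (α : Type*) (p : Set (Sym2 α) → Prop) : ℝ :=
  Nat.card {P : Set (Sym2 α) // IsPerfectMatching P ∧ p P} /
    Nat.card {P : Set (Sym2 α) // IsPerfectMatching P}

theorem matchingProb_nonneg (p : Set (Sym2 α) → Prop) : 0 ≤ matchingProb α p := by
  unfold matchingProb
  positivity

variable [Finite α]

theorem matchingProb_mono {p p' : Set (Sym2 α) → Prop} (h : ∀ P, p P → p' P) :
    matchingProb α p ≤ matchingProb α p' := by
  unfold matchingProb
  gcongr
  exact Nat.card_mono (Set.toFinite _) fun P hP => ⟨hP.1, h P hP.2⟩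

theorem matchingProb_innerPairs_eq_of_card_eq {S T : Finset α} (hST : #S = #T) (s : ℝ) :
    matchingProb α (fun P => s ≤ innerPairs P (S : Set α)) =
      matchingProb α (fun P => s ≤ innerPairs P (T : Set α)) := by
  suffices hle : ∀ S T : Finset α, #S = #T →
      matchingProb α (fun P => s ≤ innerPairs P (S : Set α)) ≤
        matchingProb α (fun P => s ≤ innerPairs P (T : Set α)) from
    (hle S T hST).antisymm (hle T S hST.symm)
  intro S T hST
  have := Fintype.ofFinite α
  classical
  let π := (equivOfCardEq hST).extendSubtype
  have hπ : π ⁻¹' (T : Set α) = S := by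
    ext x
    exact ⟨fun h => by_contra fun hx => Equiv.extendSubtype_not_mem (equivOfCardEq hST) x hx h,
      fun h => Equiv.extendSubtype_mem (equivOfCardEq hST) x h⟩
  unfold matchingProb
  gcongr
  refine Nat.card_le_card_of_injective
    (fun P => ⟨Sym2.map π '' P.1, P.2.1.image π, ?_⟩) fun P Q hPQ => ?_
  · simpa only [innerPairs_image, hπ] using P.2.2
  · exact Subtype.ext (Set.image_injective.2 (Sym2.map.injective π.injective)
      (congrArg Subtype.val hPQ))

theorem sum_matchingProb_le {s : Finset ι} {p : ι → Set (Sym2 α) → Prop}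
    [∀ i, DecidablePred (p i)] {c : ℝ} (hc : 0 ≤ c)
    (h : ∀ P, IsPerfectMatching P → (#{i ∈ s | p i P} : ℝ) ≤ c) :
    ∑ i ∈ s, matchingProb α (p i) ≤ c := by
  classical
  have := Fintype.ofFinite α
  have hcount : ∑ i ∈ s, #{P | IsPerfectMatching P ∧ p i P} =
      ∑ P with IsPerfectMatching P, #{i ∈ s | p i P} := by
    simp only [← filter_filter]
    exact sum_card_bipartiteAbove_eq_sum_card_bipartiteBelow p
  simp only [matchingProb, ← sum_div, Nat.card_eq_fintype_card, Fintype.card_subtype]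
  refine div_le_of_le_mul₀ (Nat.cast_nonneg _) hc ?_
  rw [← Nat.cast_sum, hcount, Nat.cast_sum, mul_comm, ← nsmul_eq_mul]
  exact sum_le_card_nsmul _ _ _ fun P hP => h P (mem_filter.1 hP).2

theorem one_sub_sum_le_matchingProb_forall (hα : ∃ P : Set (Sym2 α), IsPerfectMatching P)
    (s : Finset ι) (p : ι → Set (Sym2 α) → Prop) :
    1 - ∑ i ∈ s, matchingProb α (fun P => ¬ p i P) ≤ matchingProb α (fun P => ∀ i ∈ s, p i P) := by
  classical
  have := Fintype.ofFinite α
  obtain ⟨P₀, hP₀⟩ := hα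
  have hpos : 0 < #{P : Set (Sym2 α) | IsPerfectMatching P} := card_pos.2 ⟨P₀, by simpa using hP₀⟩
  have hcover : ({P | IsPerfectMatching P} : Finset (Set (Sym2 α))) ⊆
      ({P | IsPerfectMatching P ∧ ∀ i ∈ s, p i P} : Finset (Set (Sym2 α))) ∪
        s.biUnion fun i => {P | IsPerfectMatching P ∧ ¬ p i P} := by
    intro P hP
    simp only [mem_filter, mem_univ, true_and, mem_union, mem_biUnion] at hP ⊢
    by_cases hall : ∀ i ∈ s, p i P
    · exact Or.inl ⟨hP, hall⟩
    · push Not at hall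
      exact Or.inr (hall.imp fun i hi => ⟨hi.1, hP, hi.2⟩)
  have hcard := (card_le_card hcover).trans <| (card_union_le _ _).trans <|
    Nat.add_le_add_left card_biUnion_le _
  simp only [matchingProb, ← sum_div, Nat.card_eq_fintype_card, Fintype.card_subtype]
  rw [one_sub_div (by positivity)]
  gcongr
  rw [sub_le_iff_le_add]
  exact_mod_cast hcard

end MatchingProb

section Chernoff

variable {α : Type*} [Fintype α]

/-- By symmetry the probability is the average over all `T` with `#T = #S`, and for each matching
the number of such `T` is bounded by the generating function. -/
theorem choose_mul_matchingProb_innerPairs_mul_le {q r : ℝ} (hq : 0 < q) (hr : 1 ≤ r)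
    (S : Finset α) (s : ℝ) :
    (Fintype.card α).choose #S * matchingProb α (fun P => s ≤ innerPairs P (S : Set α)) *
        (q ^ #S * r ^ s) ≤
      (1 + 2 * q + q ^ 2 * r) ^ (Fintype.card α / 2 : ℝ) := by
  have : 0 < r := zero_lt_one.trans_le hr
  have havg : (Fintype.card α).choose #S * matchingProb α (fun P => s ≤ innerPairs P (S : Set α)) =
      ∑ T ∈ powersetCard #S (univ : Finset α),
        matchingProb α (fun P => s ≤ innerPairs P (T : Set α)) := by
    rw [sum_congr rfl fun T hT =>
      matchingProb_innerPairs_eq_of_card_eq (mem_powersetCard.1 hT).2 s, sum_const,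
      card_powersetCard, card_univ, nsmul_eq_mul]
  rw [havg, ← le_div_iff₀ (by positivity)]
  refine sum_matchingProb_le (by positivity) fun P hP => ?_
  rw [le_div_iff₀ (by positivity)]
  exact hP.card_filter_innerPairs_mul_le hq hr #S s

theorem choose_mul_matchingProb_innerPairs_le_exp {q r x y : ℝ} (hq : 0 < q) (hr : 1 ≤ r)
    {S : Finset α} (hx : (#S : ℝ) = Fintype.card α * x) :
    (Fintype.card α).choose #S *
        matchingProb α (fun P => Fintype.card α * y ≤ innerPairs P (S : Set α)) ≤
      Real.exp (Fintype.card α *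
        (Real.log (1 + 2 * q + q ^ 2 * r) / 2 - x * Real.log q - y * Real.log r)) := by
  have hr0 : 0 < r := zero_lt_one.trans_le hr
  have h := choose_mul_matchingProb_innerPairs_mul_le hq hr S (Fintype.card α * y)
  rw [← le_div_iff₀ (by positivity)] at h
  refine h.trans_eq ?_
  rw [← Real.rpow_natCast q #S, Real.rpow_def_of_pos (by positivity), Real.rpow_def_of_pos hq,
    Real.rpow_def_of_pos hr0, ← Real.exp_add, ← Real.exp_sub, hx]
  congr 1
  ring

end Chernoff

section Binomial

open Nat in
theorem factorial_mul_pow_le (a j : ℕ) : a ! * a ^ j ≤ j ! * a ^ a := by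
  rcases le_total j a with h | h <;> obtain ⟨k, rfl⟩ := Nat.exists_eq_add_of_le h
  · rw [← factorial_mul_ascFactorial, pow_add _ j k, mul_assoc, mul_comm (_ ^ j) (_ ^ k)]
    gcongr
    exact ascFactorial_le_pow_add j k
  · rw [pow_add, ← mul_assoc, mul_right_comm]
    gcongr
    simpa using factorial_mul_pow_sub_le_factorial h

/-- The mode of a binomial distribution with integer mean is its mean. -/
theorem choose_mul_pow_mul_pow_le {a b j l : ℕ} (h : j + l = a + b) :
    (a + b).choose j * (a ^ j * b ^ l) ≤ (a + b).choose a * (a ^ a * b ^ b) := by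
  have hfact : (a + b).choose j * (j.factorial * l.factorial) =
      (a + b).choose a * (a.factorial * b.factorial) := by
    rw [Nat.choose_symm_add (b := b), ← mul_assoc, ← mul_assoc,
      Nat.add_choose_mul_factorial_mul_factorial, ← h, Nat.choose_symm_add,
      Nat.add_choose_mul_factorial_mul_factorial]
  have hpos : 0 < a.factorial * b.factorial := by positivity
  refine Nat.le_of_mul_le_mul_right ?_ hpos
  calc (a + b).choose j * (a ^ j * b ^ l) * (a.factorial * b.factorial)
      = (a + b).choose j * ((a.factorial * a ^ j) * (b.factorial * b ^ l)) := by ring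
    _ ≤ (a + b).choose j * ((j.factorial * a ^ a) * (l.factorial * b ^ b)) := by
        gcongr (a + b).choose j * (?_ * ?_) <;> exact factorial_mul_pow_le _ _
    _ = (a + b).choose j * (j.factorial * l.factorial) * (a ^ a * b ^ b) := by ring
    _ = (a + b).choose a * (a ^ a * b ^ b) * (a.factorial * b.factorial) := by rw [hfact]; ring

theorem add_pow_le_succ_mul_choose (a b : ℕ) :
    (a + b) ^ (a + b) ≤ (a + b + 1) * ((a + b).choose a * (a ^ a * b ^ b)) := by
  calc (a + b) ^ (a + b)
      = ∑ p ∈ antidiagonal (a + b), (a + b).choose p.1 * (a ^ p.1 * b ^ p.2) := by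
        simp only [(Commute.all a b).add_pow', smul_eq_mul]
    _ ≤ #(antidiagonal (a + b)) • ((a + b).choose a * (a ^ a * b ^ b)) :=
        sum_le_card_nsmul _ _ _ fun p hp => choose_mul_pow_mul_pow_le (mem_antidiagonal.1 hp)
    _ = _ := by rw [Nat.card_antidiagonal, smul_eq_mul]

theorem pow_le_pow_mul_choose {n k : ℕ} (hk : k ≤ n) : n ^ k ≤ k ^ k * n.choose k := by
  have hfactors : ∏ i ∈ range k, n * (k - i) ≤ ∏ i ∈ range k, k * (n - i) := by
    refine prod_le_prod' fun i _ => ?_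
    rw [Nat.mul_sub, Nat.mul_sub, mul_comm n k]
    gcongr
  refine Nat.le_of_mul_le_mul_right ?_ k.factorial_pos
  rwa [mul_assoc, mul_comm (n.choose k), ← Nat.descFactorial_eq_factorial_mul_choose,
    ← Nat.descFactorial_self k, Nat.descFactorial_eq_prod_range, Nat.descFactorial_eq_prod_range,
    ← card_range k, ← prod_const, ← prod_const, card_range, ← prod_mul_distrib,
    ← prod_mul_distrib]

theorem choose_mul_pow_mul_pow_le_add_pow {R : Type*} [CommSemiring R] [PartialOrder R]
    [IsOrderedRing R] {n k : ℕ} (hk : k ≤ n) {x y : R} (hx : 0 ≤ x) (hy : 0 ≤ y) :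
    n.choose k * (x ^ k * y ^ (n - k)) ≤ (x + y) ^ n := by
  rw [add_pow, mul_comm]
  exact single_le_sum (f := fun j => x ^ j * y ^ (n - j) * (n.choose j : R))
    (fun j _ => by positivity) (mem_range.2 (Nat.lt_succ_of_le hk))

variable {n k : ℕ} {x : ℝ}

theorem one_le_succ_mul_choose_mul_pow_mul_pow (hn : 0 < n) (hk : k ≤ n) (hx : (k : ℝ) = n * x) :
    1 ≤ (n + 1) * (n.choose k * (x ^ k * (1 - x) ^ (n - k))) := by
  have hn' : (0 : ℝ) < n ^ n := by positivity
  have hk' : ((n - k : ℕ) : ℝ) = n * (1 - x) := by rw [Nat.cast_sub hk, hx]; ring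
  have h : (n : ℝ) ^ n ≤ (n + 1) * (n.choose k * ((k : ℝ) ^ k * ((n - k : ℕ) : ℝ) ^ (n - k))) := by
    have := add_pow_le_succ_mul_choose k (n - k)
    rw [Nat.add_sub_cancel' hk] at this
    exact_mod_cast this
  refine le_of_mul_le_mul_right ?_ hn'
  calc 1 * (n : ℝ) ^ n
      ≤ (n + 1) * (n.choose k * ((n * x) ^ k * (n * (1 - x)) ^ (n - k))) := by
        rwa [one_mul, ← hk', ← hx]
    _ = (n + 1) * (n.choose k * (x ^ k * (1 - x) ^ (n - k))) * (n ^ k * n ^ (n - k)) := by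
        rw [mul_pow, mul_pow]; ring
    _ = _ := by rw [← pow_add, Nat.add_sub_cancel' hk]

theorem one_le_choose_mul_pow (hn : 0 < n) (hk : k ≤ n) (hx : (k : ℝ) = n * x) :
    1 ≤ n.choose k * x ^ k := by
  have h : (n : ℝ) ^ k ≤ (k : ℝ) ^ k * n.choose k := by exact_mod_cast pow_le_pow_mul_choose hk
  rw [hx, mul_pow, mul_assoc, mul_comm (x ^ k)] at h
  exact (le_mul_iff_one_le_right (by positivity)).1 h

theorem choose_mul_pow_le_exp (hk : k ≤ n) (hx : 0 ≤ x) (hkx : (k : ℝ) = n * x) :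
    n.choose k * x ^ k ≤ Real.exp k :=
  calc n.choose k * x ^ k ≤ (x + 1) ^ n := by
        simpa using choose_mul_pow_mul_pow_le_add_pow hk hx zero_le_one
    _ ≤ Real.exp x ^ n := by gcongr; exact Real.add_one_le_exp x
    _ = Real.exp k := by rw [← Real.exp_nat_mul, hkx]

theorem pow_mul_one_sub_pow_eq_exp (hk : k ≤ n) (hx : 0 < x) (hx1 : x < 1)
    (hkx : (k : ℝ) = n * x) : x ^ k * (1 - x) ^ (n - k) = Real.exp (-(n * Real.binEntropy x)) := by
  have h1 : 0 < 1 - x := sub_pos.2 hx1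
  rw [← Real.exp_log (pow_pos hx k), ← Real.exp_log (pow_pos h1 (n - k)), ← Real.exp_add,
    Real.log_pow, Real.log_pow, Nat.cast_sub hk, hkx, Real.binEntropy, Real.log_inv, Real.log_inv]
  congr 1
  ring

theorem choose_le_exp_binEntropy (hk : k ≤ n) (hx : 0 < x) (hx1 : x < 1)
    (hkx : (k : ℝ) = n * x) : n.choose k ≤ Real.exp (n * Real.binEntropy x) := by
  have h := choose_mul_pow_mul_pow_le_add_pow hk hx.le (sub_nonneg.2 hx1.le)
  rwa [pow_mul_one_sub_pow_eq_exp hk hx hx1 hkx, add_sub_cancel, one_pow, Real.exp_neg,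
    ← div_eq_mul_inv, div_le_one (Real.exp_pos _)] at h

theorem exp_binEntropy_le_succ_mul_choose (hn : 0 < n) (hk : k ≤ n) (hx : 0 < x) (hx1 : x < 1)
    (hkx : (k : ℝ) = n * x) : Real.exp (n * Real.binEntropy x) ≤ (n + 1) * n.choose k := by
  have h := one_le_succ_mul_choose_mul_pow_mul_pow hn hk hkx
  rwa [pow_mul_one_sub_pow_eq_exp hk hx hx1 hkx, ← mul_assoc, Real.exp_neg, ← div_eq_mul_inv,
    one_le_div (Real.exp_pos _)] at h

end Binomial

section Rate

theorem entHH_eq_binEntropy (x : ℝ) : entHH x = Real.binEntropy x :=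
  (Real.binEntropy_eq_negMulLog_add_negMulLog_one_sub x).symm

theorem neg_of_convexOn_of_concaveOn {f : ℝ → ℝ} {c t x y : ℝ}
    (hconv : ConvexOn ℝ (Set.Icc 0 c) f) (hconc : ConcaveOn ℝ (Set.Icc c t) f) (h0 : f 0 = 0)
    (ht : 0 ≤ f t) (hx : 0 < x) (hxy : x ≤ y) (hyt : y ≤ t) (hy : f y < 0) : f x < 0 := by
  contrapose! hy
  have of_concave : ∀ z ∈ Set.Icc c y, 0 ≤ f z → 0 ≤ f y := fun z hz hfz =>
    (le_min hfz ht).trans <| hconc.min_le_of_mem_Icc ⟨hz.1, hz.2.trans hyt⟩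
      ⟨hz.1.trans (hz.2.trans hyt), le_rfl⟩ ⟨hz.2, hyt⟩
  have of_convex : ∀ z ∈ Set.Icc x c, 0 ≤ f z := fun z hz =>
    hy.trans <| hconv.le_right_of_left_le'' ⟨le_rfl, hx.le.trans (hz.1.trans hz.2)⟩
      ⟨hx.le.trans hz.1, hz.2⟩ hx hz.1 (h0.trans_le hy)
  rcases le_total x c with hxc | hcx
  · rcases le_total y c with hyc | hcy
    · exact of_convex y ⟨hxy, hyc⟩
    · exact of_concave c ⟨le_rfl, hcy⟩ (of_convex c ⟨hxc, le_rfl⟩)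
  · exact of_concave x ⟨hcx, hxy⟩ hy

/-- The exponential growth rate in `N` of the expected number of sets `U` of density `x` in
`{1, …, N}` over which a proportion `t` of the points `U × {1, …, d}` is matched internally. -/
noncomputable def rate (d t x : ℝ) : ℝ := d * entF x t + entHH x

/-- The derivative of `rate d t` on `(0, t)`. -/
noncomputable def rateDeriv (d t x : ℝ) : ℝ :=
  d * (1 / 2 * entH t + entH (1 - t)) + (d * t / 2 - 1) * (Real.log x + 1) +
    d / 2 * (2 - t) * (Real.log (1 - (2 - t) * x) + 1) - (d - 1) * (Real.log (1 - x) + 1)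

variable {d t x : ℝ}

theorem rate_eq : rate d t = fun x =>
    d * (1 / 2 * entH t + entH (1 - t)) * x - (d * t / 2 - 1) * entH x +
      d / 2 * entH (1 - (2 - t) * x) - (d - 1) * entH (1 - x) := by
  have entH_mul : ∀ y z, entH (y * z) = z * entH y + y * entH z := Real.negMulLog_mul
  funext x
  rw [rate, entF, entHH, entH_mul, entH_mul]
  ring

theorem continuous_rate : Continuous (rate d t) := by
  have : Continuous entH := Real.continuous_negMulLog
  unfold rate entF entHH
  fun_prop

theorem one_sub_two_sub_mul_pos (ht1 : t < 1) (hxt : x < t) : 0 < 1 - (2 - t) * x := by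
  nlinarith [mul_pos (sub_pos.2 ht1) (sub_pos.2 ht1)]

theorem mul_one_sub_mul_pos (hx : 0 < x) (hxt : x < t) (ht1 : t < 1) :
    0 < x * (1 - x) * (1 - (2 - t) * x) :=
  mul_pos (mul_pos hx (sub_pos.2 (hxt.trans ht1))) (one_sub_two_sub_mul_pos ht1 hxt)

theorem hasDerivAt_rate (hx : 0 < x) (hxt : x < t) (ht1 : t < 1) :
    HasDerivAt (rate d t) (rateDeriv d t x) x := by
  have hB := one_sub_two_sub_mul_pos ht1 hxt
  have hx1 : 1 - x ≠ 0 := by linarith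
  have hentH : ∀ {y}, y ≠ 0 → HasDerivAt entH (-Real.log y - 1) y := Real.hasDerivAt_negMulLog
  have hlin : HasDerivAt (fun y => 1 - (2 - t) * y) (-(2 - t)) x := by
    simpa using ((hasDerivAt_id x).const_mul (2 - t)).const_sub 1
  have hone_sub : HasDerivAt (fun y : ℝ => 1 - y) (-1) x := (hasDerivAt_id x).const_sub 1
  have h := ((((hasDerivAt_id x).const_mul (d * (1 / 2 * entH t + entH (1 - t)))).sub
    ((hentH hx.ne').const_mul (d * t / 2 - 1))).add
    (((hentH hB.ne').comp x hlin).const_mul (d / 2))).sub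
    (((hentH hx1).comp x hone_sub).const_mul (d - 1))
  rw [rate_eq]
  refine h.congr_deriv ?_
  rw [rateDeriv]
  ring

theorem hasDerivAt_rateDeriv (hx : 0 < x) (hxt : x < t) (ht1 : t < 1) :
    HasDerivAt (rateDeriv d t) (((d * t / 2 - 1) * (1 - x) - (d - 1) * (1 - t) * x) /
      (x * (1 - x) * (1 - (2 - t) * x))) x := by
  have hB := (one_sub_two_sub_mul_pos ht1 hxt).ne'
  have hx1 : 1 - x ≠ 0 := by linarith
  have hlin : HasDerivAt (fun y => 1 - (2 - t) * y) (-(2 - t)) x := by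
    simpa using ((hasDerivAt_id x).const_mul (2 - t)).const_sub 1
  have hone_sub : HasDerivAt (fun y : ℝ => 1 - y) (-1) x := (hasDerivAt_id x).const_sub 1
  have h := ((((Real.hasDerivAt_log hx.ne').add_const 1).const_mul (d * t / 2 - 1)).const_add
    (d * (1 / 2 * entH t + entH (1 - t))) |>.add
    (((hlin.log hB).add_const 1).const_mul (d / 2 * (2 - t)))).sub
    (((hone_sub.log hx1).add_const 1).const_mul (d - 1))
  refine h.congr_deriv ?_
  generalize hB' : 1 - (2 - t) * x = B at *
  field_simp
  rw [← hB']
  ring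

theorem convexOn_rate {a b : ℝ} (ha : 0 ≤ a) (hb : b ≤ t) (ht1 : t < 1)
    (h : ∀ x ∈ Set.Ioo a b, 0 ≤ (d * t / 2 - 1) * (1 - x) - (d - 1) * (1 - t) * x) :
    ConvexOn ℝ (Set.Icc a b) (rate d t) := by
  rw [← interior_Icc] at h
  have hmem : ∀ x ∈ interior (Set.Icc a b), 0 < x ∧ x < t := fun x hx => by
    rw [interior_Icc] at hx
    exact ⟨ha.trans_lt hx.1, hx.2.trans_le hb⟩
  exact convexOn_of_hasDerivWithinAt2_nonneg (convex_Icc a b) continuous_rate.continuousOn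
    (fun x hx => (hasDerivAt_rate (hmem x hx).1 (hmem x hx).2 ht1).hasDerivWithinAt)
    (fun x hx => (hasDerivAt_rateDeriv (hmem x hx).1 (hmem x hx).2 ht1).hasDerivWithinAt)
    fun x hx => div_nonneg (h x hx)
      (mul_one_sub_mul_pos (hmem x hx).1 (hmem x hx).2 ht1).le

theorem concaveOn_rate {a b : ℝ} (ha : 0 ≤ a) (hb : b ≤ t) (ht1 : t < 1)
    (h : ∀ x ∈ Set.Ioo a b, (d * t / 2 - 1) * (1 - x) - (d - 1) * (1 - t) * x ≤ 0) :
    ConcaveOn ℝ (Set.Icc a b) (rate d t) := by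
  rw [← interior_Icc] at h
  have hmem : ∀ x ∈ interior (Set.Icc a b), 0 < x ∧ x < t := fun x hx => by
    rw [interior_Icc] at hx
    exact ⟨ha.trans_lt hx.1, hx.2.trans_le hb⟩
  exact concaveOn_of_hasDerivWithinAt2_nonpos (convex_Icc a b) continuous_rate.continuousOn
    (fun x hx => (hasDerivAt_rate (hmem x hx).1 (hmem x hx).2 ht1).hasDerivWithinAt)
    (fun x hx => (hasDerivAt_rateDeriv (hmem x hx).1 (hmem x hx).2 ht1).hasDerivWithinAt)
    fun x hx => div_nonpos_of_nonpos_of_nonneg (h x hx)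
      (mul_one_sub_mul_pos (hmem x hx).1 (hmem x hx).2 ht1).le

theorem rate_zero : rate d t 0 = 0 := by simp [rate, entF, entHH, entH]

theorem rate_self_pos (ht : 0 < t) (ht1 : t < 1) : 0 < rate d t t := by
  have entH_mul : ∀ y z, entH (y * z) = z * entH y + y * entH z := Real.negMulLog_mul
  have hentF : entF t t = 0 := by
    rw [entF, entHH, show 1 - (2 - t) * t = (1 - t) * (1 - t) by ring, entH_mul, entH_mul, entH_mul]
    ring
  rw [rate, hentF, mul_zero, zero_add, entHH_eq_binEntropy]
  exact Real.binEntropy_pos ht ht1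

theorem two_lt_mul_of_rate_neg (hd : 1 ≤ d) (hx : 0 < x) (hxt : x < t) (ht1 : t < 1)
    (h : rate d t x < 0) : 2 < d * t := by
  have ht : 0 < t := hx.trans hxt
  by_contra! hdt
  have hconc : ConcaveOn ℝ (Set.Icc 0 t) (rate d t) :=
    concaveOn_rate le_rfl le_rfl ht1 fun y hy => by
      have : 0 ≤ (d - 1) * (1 - t) * y :=
        mul_nonneg (mul_nonneg (sub_nonneg.2 hd) (sub_nonneg.2 ht1.le)) hy.1.le
      nlinarith [hy.2]
  have hmin := hconc.min_le_of_mem_Icc (Set.left_mem_Icc.2 ht.le) (Set.right_mem_Icc.2 ht.le)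
    ⟨hx.le, hxt.le⟩
  rw [rate_zero, min_eq_left (rate_self_pos ht ht1).le] at hmin
  exact h.not_ge hmin

theorem exists_convexOn_concaveOn_rate (hd : 1 ≤ d) (ht1 : t < 1) (hdt : 2 < d * t) :
    ∃ c, ConvexOn ℝ (Set.Icc 0 c) (rate d t) ∧ ConcaveOn ℝ (Set.Icc c t) (rate d t) := by
  set a := d * t / 2 - 1 with ha
  set b := (d - 1) * (1 - t) with hb
  have ha0 : 0 < a := by linarith
  have hb0 : 0 ≤ b := mul_nonneg (sub_nonneg.2 hd) (sub_nonneg.2 ht1.le)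
  have hnum : ∀ x, a * (1 - x) - b * x = (a + b) * (a / (a + b) - x) := fun x => by
    field_simp
    ring
  have hct : a / (a + b) ≤ t := by
    have : t * (a + b) - a = (1 - t) * (a + 2 - t) := by rw [ha, hb]; ring
    rw [div_le_iff₀ (by positivity)]
    nlinarith [mul_pos (sub_pos.2 ht1) (show 0 < a + 2 - t by linarith)]
  refine ⟨a / (a + b), convexOn_rate le_rfl hct ht1 fun x hx => ?_,
    concaveOn_rate (by positivity) le_rfl ht1 fun x hx => ?_⟩ <;>
    rw [hnum]
  · exact mul_nonneg (by positivity) (sub_nonneg.2 hx.2.le)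
  · exact mul_nonpos_of_nonneg_of_nonpos (by positivity) (sub_nonpos.2 hx.1.le)

theorem rate_neg_of_le {x₀ : ℝ} (hd : 1 ≤ d) (hxt : x₀ < t) (ht1 : t < 1)
    (h : rate d t x₀ < 0) (hx : 0 < x) (hxx₀ : x ≤ x₀) : rate d t x < 0 := by
  have hx₀ := hx.trans_le hxx₀
  obtain ⟨c, hconv, hconc⟩ :=
    exists_convexOn_concaveOn_rate hd ht1 (two_lt_mul_of_rate_neg hd hx₀ hxt ht1 h)
  exact neg_of_convexOn_of_concaveOn hconv hconc rate_zero
    (rate_self_pos (hx₀.trans hxt) ht1).le hx hxx₀ hxt.le h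

theorem exists_rate_le_neg {x₀ η : ℝ} (hd : 1 ≤ d) (hxt : x₀ < t) (ht1 : t < 1)
    (h : rate d t x₀ < 0) (hη : 0 < η) : ∃ κ > 0, ∀ x ∈ Set.Icc η x₀, rate d t x ≤ -κ := by
  rcases (Set.Icc η x₀).eq_empty_or_nonempty with hempty | hne
  · exact ⟨1, one_pos, by simp [hempty]⟩
  obtain ⟨y, hy, hmax⟩ := isCompact_Icc.exists_isMaxOn hne continuous_rate.continuousOn
  refine ⟨-rate d t y, neg_pos.2 (rate_neg_of_le hd hxt ht1 h (hη.trans_le hy.1) hy.2), ?_⟩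
  rwa [neg_neg]

end Rate

section Tilt

variable {α : Type*} [Fintype α] {x t : ℝ}

/-- The tilt that makes `t * x`, `1 - (2 - t) * x` and `2 * (1 - t) * x` the typical proportions of
the pairs with two, zero and one elements in the random set. -/
theorem exists_tilt (hx : 0 < x) (hxt : x < t) (ht1 : t < 1) :
    ∃ q > 0, ∃ r ≥ 1, Real.log (1 + 2 * q + q ^ 2 * r) / 2 - x * Real.log q -
      t / 2 * x * Real.log r = entF x t + entHH x := by
  obtain ⟨A, hA_def⟩ : ∃ A, A = t * x := ⟨_, rfl⟩
  obtain ⟨B, hB_def⟩ : ∃ B, B = 1 - (2 - t) * x := ⟨_, rfl⟩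
  obtain ⟨D, hD_def⟩ : ∃ D, D = (1 - t) * x := ⟨_, rfl⟩
  have hA : 0 < A := hA_def ▸ mul_pos (hx.trans hxt) hx
  have hB : 0 < B := hB_def ▸ one_sub_two_sub_mul_pos ht1 hxt
  have hD : 0 < D := hD_def ▸ mul_pos (sub_pos.2 ht1) hx
  refine ⟨D / B, by positivity, A * B / D ^ 2, ?_, ?_⟩
  · have : A * B - D ^ 2 = x * (t - x) := by rw [hA_def, hB_def, hD_def]; ring
    rw [ge_iff_le, one_le_div (by positivity)]
    linarith [mul_pos hx (sub_pos.2 hxt)]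
  · have hbase : 1 + 2 * (D / B) + (D / B) ^ 2 * (A * B / D ^ 2) = B⁻¹ := by
      have hsum : A + B + 2 * D = 1 := by rw [hA_def, hB_def, hD_def]; ring
      field_simp
      linarith only [hsum]
    rw [hbase, Real.log_inv, Real.log_div hD.ne' hB.ne', Real.log_div (by positivity)
      (by positivity), Real.log_mul hA.ne' hB.ne', Real.log_pow, entF, entH, entH, entH, ← hA_def,
      ← hB_def, ← hD_def]
    generalize Real.log A = a, Real.log B = b, Real.log D = c
    rw [hA_def, hB_def, hD_def]
    push_cast
    ring

variable [Nonempty α] {S : Finset α}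

theorem matchingProb_innerPairs_le_exp_entF (hx : 0 < x) (hxt : x < t) (ht1 : t < 1)
    (hS : (#S : ℝ) = Fintype.card α * x) :
    matchingProb α (fun P => t / 2 * #S ≤ innerPairs P (S : Set α)) ≤
      (Fintype.card α + 1) * Real.exp (Fintype.card α * entF x t) := by
  obtain ⟨q, hq, r, hr, hqr⟩ := exists_tilt hx hxt ht1
  have hchernoff := choose_mul_matchingProb_innerPairs_le_exp (y := t / 2 * x) hq hr hS
  rw [hqr, mul_left_comm, ← hS, entHH_eq_binEntropy] at hchernoff
  have hchoose := exp_binEntropy_le_succ_mul_choose Fintype.card_pos (card_le_univ S) hx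
    (hxt.trans ht1) hS
  set n := (Fintype.card α : ℝ)
  refine le_of_mul_le_mul_left ?_ (Real.exp_pos (n * Real.binEntropy x))
  calc Real.exp (n * Real.binEntropy x) * matchingProb α _
      ≤ (n + 1) * (Fintype.card α).choose #S * matchingProb α _ := by
        gcongr
        exact matchingProb_nonneg _
    _ ≤ (n + 1) * Real.exp (n * (entF x t + Real.binEntropy x)) := by
        rw [mul_assoc]
        gcongr
    _ = _ := by rw [mul_add, Real.exp_add]; ring

theorem matchingProb_innerPairs_le_exp_mul_rpow (hx : 0 < x) (hS : (#S : ℝ) = Fintype.card α * x)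
    (s : ℝ) :
    matchingProb α (fun P => s ≤ innerPairs P (S : Set α)) ≤ Real.exp (3 / 2 * #S) * x ^ s := by
  have hcard : (0 : ℝ) < Fintype.card α := by exact_mod_cast Fintype.card_pos
  have hx1 : x ≤ 1 := by
    have : (#S : ℝ) ≤ Fintype.card α := by exact_mod_cast card_le_univ S
    rwa [hS, mul_le_iff_le_one_right hcard] at this
  have hchernoff := choose_mul_matchingProb_innerPairs_mul_le hx ((one_le_inv₀ hx).2 hx1) S s
  have hchoose := one_le_choose_mul_pow Fintype.card_pos (card_le_univ S) hS
  have hbase : 1 + 2 * x + x ^ 2 * x⁻¹ ≤ Real.exp (3 * x) := by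
    rw [sq, mul_inv_cancel_right₀ hx.ne']
    linarith [Real.add_one_le_exp (3 * x)]
  rw [← div_le_iff₀ (by positivity), div_eq_mul_inv, ← Real.inv_rpow hx.le]
  set p := matchingProb α (fun P => s ≤ innerPairs P (S : Set α))
  have : 0 ≤ p := matchingProb_nonneg _
  calc p * x⁻¹ ^ s
      ≤ ((Fintype.card α).choose #S * x ^ #S) * (p * x⁻¹ ^ s) :=
        le_mul_of_one_le_left (by positivity) hchoose
    _ = (Fintype.card α).choose #S * p * (x ^ #S * x⁻¹ ^ s) := by ring
    _ ≤ Real.exp (3 * x) ^ (Fintype.card α / 2 : ℝ) := hchernoff.trans (by gcongr)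
    _ = Real.exp (3 / 2 * #S) := by
        rw [← Real.exp_mul, hS]
        congr 1
        ring

end Tilt

section DensePairs

variable {V W : Type*} [Fintype W]

theorem pairsIn_eq_innerPairs (P : Set (Sym2 (V × W))) (U : Finset V) :
    pairsIn P U = innerPairs P ((U ×ˢ univ : Finset (V × W)) : Set (V × W)) := by
  simp [innerPairs, pairsIn]

variable [Fintype V] {U : Finset V} {x t : ℝ}

theorem card_product_univ_eq (hU : (#U : ℝ) = Fintype.card V * x) :
    (#(U ×ˢ (univ : Finset W)) : ℝ) = Fintype.card (V × W) * x := by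
  rw [card_product, card_univ, Fintype.card_prod, Nat.cast_mul, Nat.cast_mul, hU]
  ring

variable [Nonempty V] [Nonempty W]

theorem choose_mul_matchingProb_pairsIn_le_exp_rate (hx : 0 < x) (hxt : x < t) (ht1 : t < 1)
    (hU : (#U : ℝ) = Fintype.card V * x) :
    (Fintype.card V).choose #U *
        matchingProb (V × W) (fun P => t * Fintype.card W / 2 * #U ≤ pairsIn P (U : Set V)) ≤
      (Fintype.card V * Fintype.card W + 1) *
        Real.exp (Fintype.card V * rate (Fintype.card W) t x) := by
  have hprob := matchingProb_innerPairs_le_exp_entF hx hxt ht1 (card_product_univ_eq (W := W) hU)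
  have hchoose := choose_le_exp_binEntropy (card_le_univ U) hx (hxt.trans ht1) hU
  rw [card_product, card_univ, Fintype.card_prod, Nat.cast_mul, Nat.cast_mul] at hprob
  simp only [pairsIn_eq_innerPairs]
  set N := (Fintype.card V : ℝ)
  set d := (Fintype.card W : ℝ)
  have hthreshold : t * d / 2 * #U = t / 2 * (#U * d) := by ring
  rw [hthreshold]
  calc _ ≤ Real.exp (N * Real.binEntropy x) * ((N * d + 1) * Real.exp (N * d * entF x t)) := by
        gcongr
        exact matchingProb_nonneg _
    _ = (N * d + 1) * Real.exp (N * rate d t x) := by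
        rw [rate, entHH_eq_binEntropy, mul_left_comm, ← Real.exp_add]
        congr 2
        ring

theorem choose_mul_matchingProb_pairsIn_le_exp_mul_rpow (hx : 0 < x)
    (hU : (#U : ℝ) = Fintype.card V * x) (s : ℝ) :
    (Fintype.card V).choose #U *
        matchingProb (V × W) (fun P => #U + s ≤ pairsIn P (U : Set V)) ≤
      Real.exp (#U * (1 + 3 / 2 * Fintype.card W)) * x ^ s := by
  have hprob := matchingProb_innerPairs_le_exp_mul_rpow hx (card_product_univ_eq (W := W) hU)
    (#U + s)
  have hchoose := choose_mul_pow_le_exp (card_le_univ U) hx.le hU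
  rw [card_product, card_univ, Nat.cast_mul, Real.rpow_add hx, Real.rpow_natCast] at hprob
  simp only [pairsIn_eq_innerPairs]
  calc _ ≤ (Fintype.card V).choose #U *
        (Real.exp (3 / 2 * (#U * Fintype.card W)) * (x ^ #U * x ^ s)) := by gcongr
    _ = (Fintype.card V).choose #U * x ^ #U *
        (Real.exp (3 / 2 * (#U * Fintype.card W)) * x ^ s) := by ring
    _ ≤ Real.exp #U * (Real.exp (3 / 2 * (#U * Fintype.card W)) * x ^ s) := by gcongr
    _ = _ := by
        rw [← mul_assoc, ← Real.exp_add]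
        congr 2
        ring

end DensePairs

section UnionBound

theorem exists_pos_mul_rpow_le {A c ε : ℝ} (hA : 0 < A) (hc : 0 < c) (hε : 0 < ε) :
    ∃ η > 0, A * η ^ c ≤ ε := by
  refine ⟨(ε / A) ^ c⁻¹, by positivity, ?_⟩
  rw [Real.rpow_inv_rpow (by positivity) hc.ne', mul_div_cancel₀ _ hA.ne']

theorem exp_mul_rpow_le_half_pow_div_sqrt {η c D x y : ℝ} {u : ℕ} (hc : 0 ≤ c)
    (hη : Real.exp D * η ^ c ≤ 1 / 4) (hx : 0 < x) (hxη : x ≤ η) (hy : 0 < y)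
    (hu : (u : ℝ) = y * x) :
    Real.exp (u * D) * x ^ (1 / 2 + c * u) ≤ (1 / 2) ^ u / √y := by
  have hfactor : Real.exp (u * D) * x ^ (1 / 2 + c * u) = (Real.exp D * x ^ c) ^ u * √x := by
    rw [Real.rpow_add hx, Real.rpow_mul hx.le, Real.rpow_natCast, ← Real.sqrt_eq_rpow,
      Real.exp_nat_mul, mul_pow]
    ring
  have hbase : Real.exp D * x ^ c ≤ 1 / 4 := by
    refine le_trans ?_ hη
    gcongr
  have hsqrt : √x * √y ≤ 2 ^ u := by
    rw [← Real.sqrt_mul hx.le, mul_comm x, ← hu]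
    have hu_le : (u : ℝ) ≤ 2 ^ u := by exact_mod_cast u.lt_two_pow_self.le
    refine Real.sqrt_le_iff.2 ⟨by positivity, hu_le.trans ?_⟩
    exact le_self_pow₀ (one_le_pow₀ one_le_two) two_ne_zero
  rw [hfactor, le_div_iff₀ (Real.sqrt_pos.2 hy), mul_assoc]
  calc (Real.exp D * x ^ c) ^ u * (√x * √y) ≤ (1 / 4) ^ u * 2 ^ u := by gcongr
    _ = (1 / 2) ^ u := by rw [← mul_pow]; norm_num

theorem sum_le_of_choose_mul_le {V : Type*} [Fintype V] {s : Finset (Finset V)}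
    {f : Finset V → ℝ} {g : ℕ → ℝ} (hg : ∀ u, 0 ≤ g u)
    (h : ∀ U ∈ s, (Fintype.card V).choose #U * f U ≤ g #U) :
    ∑ U ∈ s, f U ≤ ∑ u ∈ range (Fintype.card V + 1), g u := by
  have hpos : ∀ u ≤ Fintype.card V, (0 : ℝ) < (Fintype.card V).choose u := fun u hu => by
    exact_mod_cast Nat.choose_pos hu
  calc ∑ U ∈ s, f U ≤ ∑ U ∈ s, g #U / (Fintype.card V).choose #U := by
        refine sum_le_sum fun U hU => ?_
        rw [le_div_iff₀' (hpos _ (card_le_univ U))]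
        exact h U hU
    _ ≤ ∑ U ∈ (univ : Finset V).powerset, g #U / (Fintype.card V).choose #U :=
        sum_le_sum_of_subset_of_nonneg (fun U _ => mem_powerset.2 (subset_univ U)) fun U _ _ =>
          div_nonneg (hg _) (Nat.cast_nonneg _)
    _ = ∑ u ∈ range (Fintype.card V + 1), g u := by
        rw [sum_powerset_apply_card fun u => g u / (Fintype.card V).choose u, card_univ]
        refine sum_congr rfl fun u hu => ?_
        rw [nsmul_eq_mul, mul_div_cancel₀ _ (hpos u (mem_range_succ_iff.1 hu)).ne']

variable {V W : Type*} [Fintype V] [Fintype W] [Nonempty W] {x₀ t η κ : ℝ}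

/-- By integrality, more than `t * d / 2 * u > u` pairs means at least `u + 1` of them. Half of the
extra pair gains the factor `√(u / N)`, which makes the bound small for bounded `u`. -/
theorem choose_mul_matchingProb_lt_pairsIn_le_of_sparse [Nonempty V] {x : ℝ} {U : Finset V}
    (hdt : 2 < Fintype.card W * t)
    (hη : Real.exp (1 + 3 / 2 * Fintype.card W) * η ^ ((t * Fintype.card W / 2 - 1) / 2) ≤ 1 / 4)
    (hx : 0 < x) (hxη : x ≤ η) (hU : (#U : ℝ) = Fintype.card V * x) :
    (Fintype.card V).choose #U * matchingProb (V × W)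
        (fun P => t * Fintype.card W / 2 * #U < pairsIn P (U : Set V)) ≤
      (1 / 2) ^ #U / √(Fintype.card V) := by
  have hV : (0 : ℝ) < Fintype.card V := by exact_mod_cast Fintype.card_pos
  have : (0 : ℝ) < #U := by rw [hU]; positivity
  set c := (t * Fintype.card W / 2 - 1) / 2 with hc
  have hc0 : 0 < c := by linarith
  have integrality : ∀ e : ℕ, t * Fintype.card W / 2 * #U < e →
      (#U + (1 / 2 + c * #U) : ℝ) ≤ e := by
    intro e he
    rw [show t * Fintype.card W / 2 * #U = #U + 2 * (c * #U) by rw [hc]; ring] at he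
    have hlt : #U < e := by
      have : 0 < c * #U := by positivity
      exact_mod_cast (show (#U : ℝ) < e by linarith)
    have hle : (#U + 1 : ℝ) ≤ e := by exact_mod_cast hlt
    linarith
  calc _ ≤ (Fintype.card V).choose #U * matchingProb (V × W)
        (fun P => #U + (1 / 2 + c * #U) ≤ pairsIn P (U : Set V)) := by
        gcongr
        exact matchingProb_mono fun P => integrality _
    _ ≤ _ := choose_mul_matchingProb_pairsIn_le_exp_mul_rpow hx hU _
    _ ≤ _ := exp_mul_rpow_le_half_pow_div_sqrt hc0.le hη hx hxη hV hU

theorem choose_mul_matchingProb_lt_pairsIn_le (hdt : 2 < Fintype.card W * t) (hxt : x₀ < t)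
    (ht1 : t < 1)
    (hη : Real.exp (1 + 3 / 2 * Fintype.card W) * η ^ ((t * Fintype.card W / 2 - 1) / 2) ≤ 1 / 4)
    (hκ : ∀ x ∈ Set.Icc η x₀, rate (Fintype.card W) t x ≤ -κ) {U : Finset V} (hU : U.Nonempty)
    (hUx₀ : (#U : ℝ) ≤ x₀ * Fintype.card V) :
    (Fintype.card V).choose #U * matchingProb (V × W)
        (fun P => t * Fintype.card W / 2 * #U < pairsIn P (U : Set V)) ≤
      (1 / 2) ^ #U / √(Fintype.card V) +
        (Fintype.card V * Fintype.card W + 1) * Real.exp (-(κ * Fintype.card V)) := by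
  have := hU.to_type
  have hV : (0 : ℝ) < Fintype.card V := by exact_mod_cast Fintype.card_pos
  have : (0 : ℝ) < #U := by exact_mod_cast hU.card_pos
  obtain ⟨x, hx, hUx⟩ : ∃ x : ℝ, 0 < x ∧ (#U : ℝ) = Fintype.card V * x :=
    ⟨#U / Fintype.card V, by positivity, by field_simp⟩
  have hxx₀ : x ≤ x₀ := by
    rw [hUx, mul_comm] at hUx₀
    exact le_of_mul_le_mul_right hUx₀ hV
  rcases le_total x η with hxη | hηx
  · exact (choose_mul_matchingProb_lt_pairsIn_le_of_sparse hdt hη hx hxη hUx).trans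
      (le_add_of_nonneg_right (by positivity))
  · calc _ ≤ (Fintype.card V).choose #U * matchingProb (V × W)
          (fun P => t * Fintype.card W / 2 * #U ≤ pairsIn P (U : Set V)) := by
          gcongr
          exact matchingProb_mono fun P => le_of_lt
      _ ≤ _ := choose_mul_matchingProb_pairsIn_le_exp_rate hx (hxx₀.trans_lt hxt) ht1 hUx
      _ ≤ (Fintype.card V * Fintype.card W + 1) * Real.exp (-(κ * Fintype.card V)) := by
          gcongr
          linarith [mul_le_mul_of_nonneg_right (hκ x ⟨hηx, hxx₀⟩) hV.le]
      _ ≤ _ := le_add_of_nonneg_left (by positivity)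

theorem one_sub_le_matchingProb_forall_pairsIn_le (hdt : 2 < Fintype.card W * t) (hxt : x₀ < t)
    (ht1 : t < 1)
    (hη : Real.exp (1 + 3 / 2 * Fintype.card W) * η ^ ((t * Fintype.card W / 2 - 1) / 2) ≤ 1 / 4)
    (hκ : ∀ x ∈ Set.Icc η x₀, rate (Fintype.card W) t x ≤ -κ)
    (heven : Even (Fintype.card V * Fintype.card W)) :
    1 - (2 / √(Fintype.card V) + (Fintype.card V + 1) *
        ((Fintype.card V * Fintype.card W + 1) * Real.exp (-(κ * Fintype.card V)))) ≤
      matchingProb (V × W) fun P => ∀ U : Finset V, U.Nonempty → #U ≤ x₀ * Fintype.card V →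
        pairsIn P (U : Set V) ≤ t * Fintype.card W / 2 * #U := by
  classical
  set s : Finset (Finset V) := {U | U.Nonempty ∧ #U ≤ x₀ * Fintype.card V}
  set N := (Fintype.card V : ℝ)
  set ε := (N * Fintype.card W + 1) * Real.exp (-(κ * N))
  have hfail : ∑ U ∈ s, matchingProb (V × W)
      (fun P => ¬ (pairsIn P (U : Set V) : ℝ) ≤ t * Fintype.card W / 2 * #U) ≤
        2 / √N + (N + 1) * ε :=
    calc _ ≤ ∑ u ∈ range (Fintype.card V + 1), ((1 / 2) ^ u / √N + ε) := by
          refine sum_le_of_choose_mul_le (fun u => by positivity) fun U hU => ?_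
          simp only [not_le]
          exact choose_mul_matchingProb_lt_pairsIn_le hdt hxt ht1 hη hκ (mem_filter.1 hU).2.1
            (mem_filter.1 hU).2.2
      _ = (∑ u ∈ range (Fintype.card V + 1), (1 / 2) ^ u) / √N + (N + 1) * ε := by
          rw [sum_add_distrib, ← sum_div, sum_const, card_range, nsmul_eq_mul, Nat.cast_add_one]
      _ ≤ _ := by
          gcongr
          exact sum_geometric_two_le _
  have hunion := one_sub_sum_le_matchingProb_forall (α := V × W)
    (exists_isPerfectMatching (by rwa [Fintype.card_prod])) s
    fun U P => (pairsIn P (U : Set V) : ℝ) ≤ t * Fintype.card W / 2 * #U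
  calc _ ≤ _ := sub_le_sub_left hfail 1
    _ ≤ _ := hunion
    _ ≤ _ := matchingProb_mono fun P hP U hU hUx₀ => hP U (mem_filter.2 ⟨mem_univ U, hU, hUx₀⟩)

theorem tendsto_failure_bound (d : ℝ) {κ : ℝ} (hκ : 0 < κ) :
    Filter.Tendsto (fun N : ℕ => 2 / √N + (N + 1) * ((N * d + 1) * Real.exp (-(κ * N))))
      Filter.atTop (nhds 0) := by
  have hN : Filter.Tendsto (fun N : ℕ => (N : ℝ)) Filter.atTop Filter.atTop :=
    tendsto_natCast_atTop_atTop
  have hsqrt : Filter.Tendsto (fun N : ℕ => 2 / √(N : ℝ)) Filter.atTop (nhds 0) :=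
    (Real.tendsto_sqrt_atTop.comp hN).const_div_atTop 2
  have hpow : ∀ k : ℕ, Filter.Tendsto (fun N : ℕ => (N : ℝ) ^ k * Real.exp (-(κ * N)))
      Filter.atTop (nhds 0) := fun k => by
    simpa only [Real.rpow_natCast, neg_mul, Function.comp_def] using
      (tendsto_rpow_mul_exp_neg_mul_atTop_nhds_zero k κ hκ).comp hN
  have h := hsqrt.add ((((hpow 2).const_mul d).add ((hpow 1).const_mul (d + 1))).add (hpow 0))
  simp only [mul_zero, add_zero] at h
  refine h.congr fun N => ?_
  ring

end UnionBound

end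

theorem stmt_9 (d : ℕ) (hd : 0 < d) (x₀ t₀ : ℝ) (hx₀ : 0 < x₀) (hxt : x₀ < t₀)
    (ht₀ : t₀ < 1) (hcond : (d : ℝ) * entF x₀ t₀ + entHH x₀ < 0) :
    ∀ δ : ℝ, 0 < δ → ∃ N₀ : ℕ, ∀ N : ℕ, N₀ ≤ N → Even (N * d) →
      1 - δ <
        (Nat.card {P : Set (Sym2 (Fin N × Fin d)) // IsPerfectMatching P ∧
            ∀ U : Finset (Fin N), U.Nonempty → (U.card : ℝ) ≤ x₀ * N →
              (pairsIn P ↑U : ℝ) ≤ (t₀ * d / 2) * U.card} : ℝ) /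
          (Nat.card {P : Set (Sym2 (Fin N × Fin d)) // IsPerfectMatching P} : ℝ) := by
  intro δ hδ
  have : NeZero d := ⟨hd.ne'⟩
  have hd1 : (1 : ℝ) ≤ d := by exact_mod_cast hd
  have hdt := two_lt_mul_of_rate_neg hd1 hx₀ hxt ht₀ hcond
  obtain ⟨η, hη0, hη⟩ := exists_pos_mul_rpow_le (Real.exp_pos (1 + 3 / 2 * d))
    (show 0 < (t₀ * d / 2 - 1) / 2 by linarith) (show (0 : ℝ) < 1 / 4 by norm_num)
  obtain ⟨κ, hκ0, hκ⟩ := exists_rate_le_neg hd1 hxt ht₀ hcond hη0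
  obtain ⟨N₀, hN₀⟩ := Filter.eventually_atTop.1
    ((tendsto_failure_bound d hκ0).eventually_lt_const hδ)
  refine ⟨N₀, fun N hN heven => (sub_lt_sub_left (hN₀ N hN) 1).trans_le ?_⟩
  have hbound := one_sub_le_matchingProb_forall_pairsIn_le (V := Fin N) (W := Fin d) (x₀ := x₀)
    (t := t₀) (η := η) (κ := κ)
  simp only [Fintype.card_fin] at hbound
  exact hbound hdt hxt ht₀ hη hκ heven
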